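/- Let k ≥ 1 and let α = (α₁, …, α_r) be a partition of ℓ. Let n and n' be integers with n ≥ k + α₁, n' ≥ k + α₁, n − ℓ ≥ α₁ and n' − ℓ ≥ α₁, and let λ be the partition (n − ℓ, α₁, …, α_r) of n and λ' the partition (n' − ℓ, α₁, …, α_r) of n'. Then the number of Kronecker tableaux of length k, initial shape (n) and final shape λ equals the number of Kronecker tableaux of length k, initial shape (n') and final shape λ'; that is, in the stable range the cardinality |KT^k_{(n),λ}| depends only on k and on the truncated partition λ̄ = α. -/

import Mathlib

open Finset

namespace KroneckerPaper

/-- A (removable) corner of a Young diagram: a cell with no cell below it nor to its right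
(in English notation; equivalently, in French notation, a cell at the right end of its row
with no cell above it). -/
def IsCorner (μ : YoungDiagram) (c : ℕ × ℕ) : Prop :=
  c ∈ μ ∧ (c.1 + 1, c.2) ∉ μ ∧ (c.1, c.2 + 1) ∉ μ

/-- The *first corner* of a Young diagram: the unique corner lying on a row of maximal
length. -/
def IsFirstCorner (μ : YoungDiagram) (c : ℕ × ℕ) : Prop :=
  IsCorner μ c ∧ μ.rowLen c.1 = μ.rowLen 0

/-- `μ'` is obtained from `μ` by adding one new cell which is a corner of `μ'`. -/
def AddCorner (μ μ' : YoungDiagram) : Prop :=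
  ∃ c, IsCorner μ' c ∧ c ∉ μ.cells ∧ μ'.cells = insert c μ.cells

/-- `μ'` is obtained from `μ` by removing one corner of `μ`. -/
def RemoveCorner (μ μ' : YoungDiagram) : Prop :=
  ∃ c, IsCorner μ c ∧ μ'.cells = μ.cells.erase c

/-- `μ' ≠ μ` *differs from `μ` by the position of a corner*: it is obtained from `μ` by
removing a corner of `μ` and adding a new cell which is a corner of `μ'`. -/
def MoveCorner (μ μ' : YoungDiagram) : Prop :=
  μ' ≠ μ ∧ ∃ c c', IsCorner μ c ∧ IsCorner μ' c' ∧ c' ∉ μ.cells.erase c ∧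
    μ'.cells = insert c' (μ.cells.erase c)

/-- The one-row Young diagram `(n)`. -/
def rowDiagram (n : ℕ) : YoungDiagram :=
  YoungDiagram.ofRowLens [n] (List.pairwise_singleton _ n).sortedGE

/-- The Young diagram obtained by deleting the first (longest) row, i.e. the truncated
partition `λ̄ = (λ₂, …, λ_m)` of `λ = (λ₁, λ₂, …, λ_m)`. -/
def truncate (μ : YoungDiagram) : YoungDiagram where
  cells := (μ.cells.filter fun c => 1 ≤ c.1).image fun c => (c.1 - 1, c.2)
  isLowerSet := by
    rintro ⟨i1, j1⟩ ⟨i2, j2⟩ ⟨hi, hj⟩ h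
    simp only [Finset.coe_image, Finset.coe_filter, Set.mem_image, Set.mem_setOf_eq,
      Finset.mem_coe, YoungDiagram.mem_cells] at h ⊢
    obtain ⟨⟨a, b⟩, ⟨ha, ha1⟩, heq⟩ := h
    simp only [Prod.mk.injEq] at heq
    exact ⟨(i2 + 1, j2), ⟨μ.up_left_mem (by omega) (by omega) ha, by omega⟩, by simp⟩

/-- A *Kronecker tableau* of length `k`, initial shape `μ` and final shape `lam`:
a sequence `μ⁰ = μ, μ¹, …, μ^k = lam` of diagrams such that each `μ^{i+1}` either differs
from `μ^i` by the position of a corner, or equals `μ^i` together with the datum of a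
distinguished corner of `μ^{i+1}` other than its first corner. -/
structure KroneckerTableau (k : ℕ) (μ lam : YoungDiagram) where
  seq : Fin (k + 1) → YoungDiagram
  dist : Fin k → Option (ℕ × ℕ)
  init : seq 0 = μ
  final : seq (Fin.last k) = lam
  step : ∀ i : Fin k,
    (MoveCorner (seq i.castSucc) (seq i.succ) ∧ dist i = none) ∨
    (seq i.succ = seq i.castSucc ∧
      ∃ c, dist i = some c ∧ IsCorner (seq i.succ) c ∧ ¬ IsFirstCorner (seq i.succ) c)

/-- A *partial standard tableau* of shape `α` with labels in `{1, …, k}`: a labelling of the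
cells of `α` by pairwise distinct integers of `{1, …, k}` increasing along rows and columns
(cells outside `α` are labelled `0` by convention). -/
structure PartialST (α : YoungDiagram) (k : ℕ) where
  label : ℕ × ℕ → ℕ
  mem_of_cell : ∀ c ∈ α, label c ∈ Finset.Icc 1 k
  zero_of_not_cell : ∀ c, c ∉ α → label c = 0
  injOn : ∀ c ∈ α, ∀ c' ∈ α, label c = label c' → c = c'
  row_incr : ∀ i j1 j2 : ℕ, j1 < j2 → (i, j2) ∈ α → label (i, j1) < label (i, j2)
  col_incr : ∀ i1 i2 j : ℕ, i1 < i2 → (i2, j) ∈ α → label (i1, j) < label (i2, j)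

/-- `f^α`, the number of standard Young tableaux of shape `α`. -/
noncomputable def fSYT (α : YoungDiagram) : ℕ :=
  Nat.card (PartialST α α.card)

/-- `p₂ n k`: the number of partitions of an `n`-element set into exactly `k` blocks, each of
size at least `2` (associated Stirling numbers of the second kind). -/
noncomputable def p2 (n k : ℕ) : ℕ :=
  Nat.card {P : Finpartition (Finset.univ : Finset (Fin n)) //
    P.parts.card = k ∧ ∀ b ∈ P.parts, 2 ≤ b.card}

/-- Every non-trivial cycle of `π` is *decreasing*: `π x < x` for every element `x` of a
non-trivial cycle which is not the minimum of its cycle. -/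
def DecCycles {S : Type*} [LinearOrder S] (π : Equiv.Perm S) : Prop :=
  ∀ x, π x ≠ x → (∃ y, π.SameCycle x y ∧ y < x) → π x < x

/-- A pair `(T, π)` of a partial standard tableau of shape `α` with labels in `{1, …, k}`
and a permutation `π` of `{1, …, k}` all of whose non-trivial cycles are decreasing, such
that every fixed point of `π` is a label of `T` and every label of `T` is the greatest
element of its cycle in `π`. -/
structure TabPerm (k : ℕ) (α : YoungDiagram) where
  T : PartialST α k
  π : Equiv.Perm ℕ
  perm_of : ∀ x : ℕ, x ∉ Finset.Icc 1 k → π x = x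
  dec : DecCycles π
  fix_mem : ∀ x ∈ Finset.Icc 1 k, π x = x → ∃ c ∈ α, T.label c = x
  label_max : ∀ c ∈ α, ∀ y : ℕ, π.SameCycle (T.label c) y → y ≤ T.label c


/-- Shift down by one row. -/
def sh (c : ℕ × ℕ) : ℕ × ℕ := (c.1 + 1, c.2)

theorem sh_inj : Function.Injective sh := by
  rintro ⟨a, b⟩ ⟨c, d⟩ h
  simp only [sh, Prod.mk.injEq] at h ⊢
  omega

theorem mem_truncate (μ : YoungDiagram) (i j : ℕ) :
    (i, j) ∈ truncate μ ↔ (i + 1, j) ∈ μ := by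
  rw [← YoungDiagram.mem_cells]
  simp only [truncate, Finset.mem_image, Finset.mem_filter, YoungDiagram.mem_cells, Prod.mk.injEq,
    Prod.exists]
  constructor
  · rintro ⟨a, b, ⟨h, h1⟩, h2, rfl⟩
    have : a = i + 1 := by omega
    rwa [← this]
  · intro h
    exact ⟨i + 1, j, ⟨h, by omega⟩, by omega, rfl⟩

theorem rowLen_truncate (μ : YoungDiagram) (i : ℕ) :
    (truncate μ).rowLen i = μ.rowLen (i + 1) := by
  apply le_antisymm
  · by_contra h
    push Not at h
    have := YoungDiagram.mem_iff_lt_rowLen.2 h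
    rw [mem_truncate, YoungDiagram.mem_iff_lt_rowLen] at this
    omega
  · by_contra h
    push Not at h
    have := YoungDiagram.mem_iff_lt_rowLen.2 h
    rw [← mem_truncate, YoungDiagram.mem_iff_lt_rowLen] at this
    omega

theorem card_sdiff_eq (μ ν : YoungDiagram) :
    (μ.cells \ ν.cells).card =
      (μ.rowLen 0 - ν.rowLen 0) + ((truncate μ).cells \ (truncate ν).cells).card := by
  have e : μ.cells \ ν.cells =
      ((Finset.Ico (ν.rowLen 0) (μ.rowLen 0)).image fun j => ((0, j) : ℕ × ℕ)) ∪
      ((truncate μ).cells \ (truncate ν).cells).image sh := by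
    ext ⟨i, j⟩
    simp only [Finset.mem_sdiff, Finset.mem_union, Finset.mem_image, YoungDiagram.mem_cells,
      Finset.mem_Ico, Prod.mk.injEq, Prod.exists, sh, mem_truncate]
    constructor
    · rintro ⟨h, h'⟩
      rcases i with _ | i
      · rw [YoungDiagram.mem_iff_lt_rowLen] at h h'
        exact Or.inl ⟨j, by omega, rfl, rfl⟩
      · exact Or.inr ⟨i, j, ⟨h, h'⟩, rfl, rfl⟩
    · rintro (⟨a, h, rfl, rfl⟩ | ⟨a, b, h, rfl, rfl⟩)
      · rw [YoungDiagram.mem_iff_lt_rowLen, YoungDiagram.mem_iff_lt_rowLen]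
        omega
      · exact h
  rw [e, Finset.card_union_of_disjoint, Finset.card_image_of_injective _ sh_inj,
    Finset.card_image_of_injective, Nat.card_Ico]
  · intro a b h
    simpa using h
  · rw [Finset.disjoint_left]
    rintro ⟨i, j⟩ h h'
    simp only [Finset.mem_image, Prod.mk.injEq, Prod.exists, sh] at h h'
    obtain ⟨a, _, h1, _⟩ := h
    obtain ⟨b, c, _, h2, _⟩ := h'
    omega

theorem truncate_bot : truncate ⊥ = ⊥ := by
  ext ⟨i, j⟩
  simp only [YoungDiagram.mem_cells, mem_truncate]
  simp

theorem rowLen_bot (i : ℕ) : (⊥ : YoungDiagram).rowLen i = 0 := by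
  by_contra h
  have := YoungDiagram.mem_iff_lt_rowLen.2 (Nat.pos_of_ne_zero h)
  simp at this

theorem card_eq (μ : YoungDiagram) : μ.card = μ.rowLen 0 + (truncate μ).card := by
  have := card_sdiff_eq μ ⊥
  rw [truncate_bot, rowLen_bot] at this
  simpa using this

theorem eq_of_card_truncate {μ ν : YoungDiagram} (h : μ.card = ν.card)
    (ht : truncate μ = truncate ν) : μ = ν := by
  have h1 := card_eq μ
  have h2 := card_eq ν
  rw [ht] at h1
  ext ⟨i, j⟩
  simp only [YoungDiagram.mem_cells]
  rcases i with _ | i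
  · rw [YoungDiagram.mem_iff_lt_rowLen, YoungDiagram.mem_iff_lt_rowLen]
    omega
  · rw [← mem_truncate, ← mem_truncate, ht]

/-- Add a long first row. -/
def extend (n : ℕ) (β : YoungDiagram) : YoungDiagram where
  cells := ((Finset.range (max (n - β.card) (β.rowLen 0))).image fun j => ((0, j) : ℕ × ℕ)) ∪
      β.cells.image sh
  isLowerSet := by
    rintro ⟨i1, j1⟩ ⟨i2, j2⟩ ⟨hi, hj⟩ h
    simp only [Finset.coe_union, Finset.coe_image, Set.mem_union, Set.mem_image, Finset.mem_coe,
      Finset.mem_range, Prod.mk.injEq, Prod.exists, YoungDiagram.mem_cells, sh] at h hi hj ⊢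
    rcases h with ⟨a, h, rfl, rfl⟩ | ⟨a, b, h, rfl, rfl⟩
    · exact Or.inl ⟨j2, by omega, by omega, rfl⟩
    · rcases i2 with _ | i2
      · left
        refine ⟨j2, ?_, rfl, rfl⟩
        have : (0, j2) ∈ β := β.up_left_mem (by omega) (by omega) h
        rw [YoungDiagram.mem_iff_lt_rowLen] at this
        exact lt_of_lt_of_le this (le_max_right _ _)
      · exact Or.inr ⟨i2, j2, β.up_left_mem (by omega) (by omega) h, rfl, rfl⟩

theorem mem_extend_succ (n : ℕ) (β : YoungDiagram) (i j : ℕ) :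
    (i + 1, j) ∈ extend n β ↔ (i, j) ∈ β := by
  rw [← YoungDiagram.mem_cells]
  simp [extend, sh]

theorem mem_extend_zero (n : ℕ) (β : YoungDiagram) (j : ℕ) :
    (0, j) ∈ extend n β ↔ j < max (n - β.card) (β.rowLen 0) := by
  rw [← YoungDiagram.mem_cells]
  simp [extend, sh]

theorem truncate_extend (n : ℕ) (β : YoungDiagram) : truncate (extend n β) = β := by
  ext ⟨i, j⟩
  simp only [YoungDiagram.mem_cells, mem_truncate, mem_extend_succ]

theorem rowLen_extend (n : ℕ) (β : YoungDiagram) :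
    (extend n β).rowLen 0 = max (n - β.card) (β.rowLen 0) := by
  have key : ∀ j, j < (extend n β).rowLen 0 ↔ j < max (n - β.card) (β.rowLen 0) := by
    intro j
    rw [← YoungDiagram.mem_iff_lt_rowLen, mem_extend_zero]
  exact le_antisymm (not_lt.1 fun h => lt_irrefl _ ((key _).1 h))
    (not_lt.1 fun h => lt_irrefl _ ((key _).2 h))

theorem card_extend {n : ℕ} {β : YoungDiagram} (h : β.card + β.rowLen 0 ≤ n) :
    (extend n β).card = n := by
  rw [card_eq, truncate_extend, rowLen_extend]
  omega

theorem extend_truncate {n : ℕ} {μ : YoungDiagram} (h : μ.card = n) :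
    extend n (truncate μ) = μ := by
  apply eq_of_card_truncate
  · rw [h, card_extend]
    have := card_eq μ
    have := μ.rowLen_anti 0 1 (by omega)
    rw [rowLen_truncate]
    simp only [zero_add]
    omega
  · rw [truncate_extend]

theorem card_of_move {μ ν : YoungDiagram} (h : MoveCorner μ ν) : ν.card = μ.card := by
  obtain ⟨_, c, c', hc, _, hn, he⟩ := h
  have h1 : c ∈ μ.cells := hc.1
  have := Finset.card_pos.2 ⟨c, h1⟩
  show ν.cells.card = μ.cells.card
  rw [he, Finset.card_insert_of_notMem hn, Finset.card_erase_of_mem h1]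
  omega

theorem corner_of_sdiff {μ ν : YoungDiagram} {c : ℕ × ℕ} (h : μ.cells \ ν.cells = {c}) :
    IsCorner μ c := by
  have hc : c ∈ μ.cells \ ν.cells := by simp [h]
  rw [Finset.mem_sdiff, YoungDiagram.mem_cells, YoungDiagram.mem_cells] at hc
  have key : ∀ d, c ≤ d → d ∈ μ → d = c := by
    intro d hd hm
    have : d ∈ μ.cells \ ν.cells := by
      rw [Finset.mem_sdiff, YoungDiagram.mem_cells, YoungDiagram.mem_cells]
      exact ⟨hm, fun hh => hc.2 (ν.isLowerSet hd hh)⟩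
    simpa [h] using this
  refine ⟨hc.1, fun hh => ?_, fun hh => ?_⟩
  · have := key _ (Prod.mk_le_mk.2 ⟨Nat.le_succ _, le_rfl⟩) hh
    have := congrArg Prod.fst this
    simp at this
  · have := key _ (Prod.mk_le_mk.2 ⟨le_rfl, Nat.le_succ _⟩) hh
    have := congrArg Prod.snd this
    simp at this

theorem move_iff {μ ν : YoungDiagram} (h : μ.card = ν.card) :
    MoveCorner μ ν ↔ (μ.cells \ ν.cells).card = 1 := by
  have hs : (μ.cells \ ν.cells).card = (ν.cells \ μ.cells).card := by
    have h1 := Finset.card_sdiff_add_card_inter μ.cells ν.cells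
    have h2 := Finset.card_sdiff_add_card_inter ν.cells μ.cells
    rw [Finset.inter_comm] at h2
    have h' : μ.cells.card = ν.cells.card := h
    omega
  constructor
  · rintro ⟨hne, c, c', hc, hc', hn, he⟩
    apply le_antisymm
    · apply Finset.card_le_one.2
      have : ∀ a ∈ μ.cells \ ν.cells, a = c := by
        intro a ha
        rw [he] at ha
        simp only [Finset.mem_sdiff, Finset.mem_insert, Finset.mem_erase] at ha
        tauto
      intro a ha b hb
      rw [this a ha, this b hb]
    · by_contra hh
      have h0 : (μ.cells \ ν.cells).card = 0 := by omega
      have h0' : (ν.cells \ μ.cells).card = 0 := by omega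
      rw [Finset.card_eq_zero, Finset.sdiff_eq_empty_iff_subset] at h0 h0'
      exact hne (YoungDiagram.ext (Finset.Subset.antisymm h0' h0))
  · intro h1
    obtain ⟨c, hc⟩ := Finset.card_eq_one.1 h1
    obtain ⟨c', hc'⟩ := Finset.card_eq_one.1 (hs ▸ h1)
    have m : ∀ a, (a ∈ μ.cells ∧ a ∉ ν.cells) ↔ a = c := by
      intro a
      rw [← Finset.mem_sdiff, hc, Finset.mem_singleton]
    have m' : ∀ a, (a ∈ ν.cells ∧ a ∉ μ.cells) ↔ a = c' := by
      intro a
      rw [← Finset.mem_sdiff, hc', Finset.mem_singleton]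
    refine ⟨?_, c, c', corner_of_sdiff hc, corner_of_sdiff hc', ?_, ?_⟩
    · rintro rfl
      simp at h1
    · have := (m' c').2 rfl
      simp only [Finset.mem_erase]
      tauto
    · ext a
      have := m a
      have := m' a
      simp only [Finset.mem_insert, Finset.mem_erase]
      tauto

/-- Adjacency of truncated shapes. -/
def Adj (β γ : YoungDiagram) : Prop :=
  max (β.cells \ γ.cells).card (γ.cells \ β.cells).card = 1

theorem move_iff_adj {μ ν : YoungDiagram} (h : μ.card = ν.card) :
    MoveCorner μ ν ↔ Adj (truncate μ) (truncate ν) := by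
  rw [move_iff h, card_sdiff_eq, Adj]
  have h1 := Finset.card_sdiff_add_card_inter (truncate μ).cells (truncate ν).cells
  have h2 := Finset.card_sdiff_add_card_inter (truncate ν).cells (truncate μ).cells
  rw [Finset.inter_comm] at h2
  have h3 : μ.card = μ.rowLen 0 + (truncate μ).cells.card := card_eq μ
  have h4 : ν.card = ν.rowLen 0 + (truncate ν).cells.card := card_eq ν
  omega

theorem Adj.card_le {β γ : YoungDiagram} (h : Adj β γ) : γ.card ≤ β.card + 1 := by
  rw [Adj] at h
  have h1 := Finset.card_sdiff_add_card_inter β.cells γ.cells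
  have h2 := Finset.card_sdiff_add_card_inter γ.cells β.cells
  rw [Finset.inter_comm] at h2
  show γ.cells.card ≤ β.cells.card + 1
  omega

theorem Adj.rowLen_le {β γ : YoungDiagram} (h : Adj β γ) : β.rowLen 0 ≤ γ.rowLen 0 + 1 := by
  rw [Adj] at h
  have := card_sdiff_eq β γ
  omega

/-- Truncated Kronecker tableaux. -/
structure RT (k : ℕ) (α : YoungDiagram) where
  seq : Fin (k + 1) → YoungDiagram
  dist : Fin k → Option (ℕ × ℕ)
  init : seq 0 = ⊥
  final : seq (Fin.last k) = α
  step : ∀ i : Fin k,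
    (Adj (seq i.castSucc) (seq i.succ) ∧ dist i = none) ∨
    (seq i.succ = seq i.castSucc ∧ ∃ c, dist i = some (sh c) ∧ IsCorner (seq i.succ) c)

theorem RT.card_le {k : ℕ} {α : YoungDiagram} (R : RT k α) (i : Fin (k + 1)) :
    (R.seq i).card ≤ i := by
  induction i using Fin.induction with
  | zero => rw [R.init]; simp
  | succ i ih =>
    simp only [Fin.val_succ, Fin.val_castSucc] at ih ⊢
    rcases R.step i with ⟨h, _⟩ | ⟨h, _⟩
    · have := h.card_le
      omega
    · rw [h]
      omega

theorem RT.rowLen_le {k : ℕ} {α : YoungDiagram} (R : RT k α) (i : Fin (k + 1)) :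
    (R.seq i).rowLen 0 + i ≤ k + α.rowLen 0 := by
  induction i using Fin.reverseInduction with
  | last => rw [R.final]; simp; omega
  | cast i ih =>
    simp only [Fin.val_succ, Fin.val_castSucc] at ih ⊢
    rcases R.step i with ⟨h, _⟩ | ⟨h, _⟩
    · have := h.rowLen_le
      omega
    · rw [← h]
      omega

theorem RT.feasible {k : ℕ} {α : YoungDiagram} (R : RT k α) (i : Fin (k + 1)) :
    (R.seq i).card + (R.seq i).rowLen 0 ≤ k + α.rowLen 0 := by
  have := R.card_le i
  have := R.rowLen_le i
  omega

theorem KroneckerTableau.card {k : ℕ} {μ lam : YoungDiagram} (K : KroneckerTableau k μ lam)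
    (i : Fin (k + 1)) : (K.seq i).card = μ.card := by
  induction i using Fin.induction with
  | zero => rw [K.init]
  | succ i ih =>
    rcases K.step i with ⟨h, _⟩ | ⟨h, _⟩
    · rw [card_of_move h, ih]
    · rw [h, ih]

theorem truncate_row (n : ℕ) : truncate (rowDiagram n) = ⊥ := by
  ext ⟨i, j⟩
  simp only [YoungDiagram.mem_cells, mem_truncate, rowDiagram, YoungDiagram.mem_ofRowLens]
  simp

theorem card_row (n : ℕ) : (rowDiagram n).card = n := by
  have h : ∀ j, j < (rowDiagram n).rowLen 0 ↔ j < n := by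
    intro j
    rw [← YoungDiagram.mem_iff_lt_rowLen, rowDiagram, YoungDiagram.mem_ofRowLens]
    simp
  rw [card_eq, truncate_row]
  rw [show (⊥ : YoungDiagram).card = 0 by simp, add_zero]
  exact le_antisymm (not_lt.1 fun hh => lt_irrefl _ ((h _).1 hh))
    (not_lt.1 fun hh => lt_irrefl _ ((h _).2 hh))

theorem corner_truncate (μ : YoungDiagram) (c : ℕ × ℕ) :
    IsCorner (truncate μ) c ↔ IsCorner μ (sh c) := by
  obtain ⟨i, j⟩ := c
  simp only [IsCorner, mem_truncate, sh]

/-- The truncation bijection. -/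
def ktEquiv {k n : ℕ} {α lam : YoungDiagram} (hn : lam.card = n) (ht : truncate lam = α)
    (h1 : k + α.rowLen 0 ≤ n) : KroneckerTableau k (rowDiagram n) lam ≃ RT k α where
  toFun K :=
    { seq := fun i => truncate (K.seq i)
      dist := K.dist
      init := by rw [K.init, truncate_row]
      final := by rw [K.final, ht]
      step := by
        intro i
        rcases K.step i with ⟨h, hd⟩ | ⟨h, c, hd, hc, hf⟩
        · exact Or.inl ⟨(move_iff_adj (by rw [K.card, K.card])).1 h, hd⟩
        · refine Or.inr ⟨by rw [h], ?_⟩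
          obtain ⟨a, b⟩ := c
          rcases a with _ | a
          · exact absurd ⟨hc, rfl⟩ hf
          · exact ⟨(a, b), hd, (corner_truncate _ _).2 hc⟩ }
  invFun R :=
    { seq := fun i => extend n (R.seq i)
      dist := R.dist
      init := by
        rw [R.init, ← truncate_row n]
        exact extend_truncate (card_row n)
      final := by
        rw [R.final, ← ht]
        exact extend_truncate hn
      step := by
        intro i
        rcases R.step i with ⟨h, hd⟩ | ⟨h, c, hd, hc⟩
        · refine Or.inl ⟨(move_iff_adj ?_).2 ?_, hd⟩
          · rw [card_extend ((R.feasible _).trans h1), card_extend ((R.feasible _).trans h1)]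
          · rwa [truncate_extend, truncate_extend]
        · refine Or.inr ⟨by rw [h], sh c, hd, ?_, ?_⟩
          · rwa [← corner_truncate, truncate_extend]
          · rintro ⟨_, hr⟩
            have e1 : (extend n (R.seq i.succ)).rowLen (sh c).1 = (R.seq i.succ).rowLen c.1 := by
              rw [sh, ← rowLen_truncate, truncate_extend]
            have e2 := (R.seq i.succ).rowLen_anti 0 c.1 (Nat.zero_le _)
            have e3 := R.card_le i.castSucc
            have e4 := R.rowLen_le i.succ
            rw [← h] at e3
            rw [e1, rowLen_extend] at hr
            simp only [Fin.val_succ, Fin.val_castSucc] at e3 e4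
            omega }
  left_inv K := by
    have : (fun i => extend n (truncate (K.seq i))) = K.seq := by
      funext i
      exact extend_truncate (by rw [K.card, card_row])
    cases K
    simpa using this
  right_inv R := by
    cases R
    simp [truncate_extend]

/-- In the stable range, the number of Kronecker tableaux of length `k`, initial shape `(n)`
and final shape `λ = (n - ℓ, α₁, …, α_r)` depends only on `k` and on the truncated partition
`λ̄ = α`. -/
theorem statement1 (k ℓ n n' : ℕ) (hk : 1 ≤ k) (α lam lam' : YoungDiagram)
    (hα : α.card = ℓ) (hn : lam.card = n) (hn' : lam'.card = n')
    (ht : truncate lam = α) (ht' : truncate lam' = α)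
    (h1 : k + α.rowLen 0 ≤ n) (h1' : k + α.rowLen 0 ≤ n')
    (h2 : α.rowLen 0 ≤ n - ℓ) (h2' : α.rowLen 0 ≤ n' - ℓ) :
    Nat.card (KroneckerTableau k (rowDiagram n) lam) =
      Nat.card (KroneckerTableau k (rowDiagram n') lam') :=
  Nat.card_congr ((ktEquiv hn ht h1).trans (ktEquiv hn' ht' h1').symm)

end KroneckerPaper
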